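/- arXiv:math/0507470 — 3 statements merged into one kernel-verified Lean document; each statement's English description precedes it below -/
import Mathlib

section
/- For natural numbers p < m, the polynomial obtained by applying the operator x·(d/dx) exactly p times to (1-x)^m in ℚ[x] is divisible by (1-x); equivalently, its value at x = 1 is 0. -/
open Polynomial

section

variable {R : Type*} [CommSemiring R]

theorem pow_sub_dvd_iterate_mul_derivative_of_pow_dvd (a : R[X]) {f g : R[X]} {n : ℕ} (k : ℕ)
    (hfg : f ^ n ∣ g) : f ^ (n - k) ∣ (fun h : R[X] => a * derivative h)^[k] g := by
  induction k with
  | zero => exact hfg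
  | succ k ih =>
    rw [Function.iterate_succ_apply']
    exact (pow_sub_one_dvd_derivative_of_pow_dvd ih).mul_left a

theorem x_dx_iterate_one_sub_X_pow_dvd_general (a : R[X]) {f : R[X]} {c : R} (hf : f.IsRoot c)
    (m p : ℕ) (hpm : p < m) :
    f ∣ (fun h : R[X] => a * derivative h)^[p] (f ^ m) ∧
      ((fun h : R[X] => a * derivative h)^[p] (f ^ m)).eval c = 0 := by
  have dvd_iterate : f ∣ (fun h : R[X] => a * derivative h)^[p] (f ^ m) :=
    (dvd_pow_self f (Nat.sub_ne_zero_of_lt hpm)).trans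
      (pow_sub_dvd_iterate_mul_derivative_of_pow_dvd a p dvd_rfl)
  exact ⟨dvd_iterate, hf.dvd dvd_iterate⟩

end

/-- For natural numbers `p < m`, the polynomial obtained by applying the operator
`x·(d/dx)` exactly `p` times to `(1-x)^m` in `ℚ[x]` is divisible by `1 - x`;
equivalently, its value at `x = 1` is `0`. -/
theorem x_dx_iterate_one_sub_X_pow_dvd (m p : ℕ) (hpm : p < m) :
    (1 - X : Polynomial ℚ) ∣
        (fun h : Polynomial ℚ => X * derivative h)^[p] ((1 - X : Polynomial ℚ) ^ m) ∧
      ((fun h : Polynomial ℚ => X * derivative h)^[p] ((1 - X : Polynomial ℚ) ^ m)).eval 1 = 0 :=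
  x_dx_iterate_one_sub_X_pow_dvd_general X (by simp [IsRoot.def]) m p hpm
end

section
/- For every natural number m, the polynomial obtained by applying the operator x·(d/dx) exactly m times to (1-x)^m in ℚ[x] takes the value (-1)^m · m! at x = 1. -/
/-!
Let `D` be a derivation and let the ring homomorphism `φ` kill `p`. By the Leibniz rule, `D` sends
`p ^ (m + 1) * g` to `p ^ m * ((m + 1) * D p * g + p * D g)`, and `φ` kills the last summand. So
each application of `D` consumes one factor `p`, and `m` of them send `p ^ m` to an element with
image `m! * φ (D p) ^ m`. Here `D = x·(d/dx)`, `p = 1 - x` and `φ` is evaluation at `1`, so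
`φ (D p) = -1`.
-/

open Polynomial

section Derivation

variable {R A B : Type*} [CommSemiring R] [CommSemiring A] [CommSemiring B] [Algebra R A]

theorem derivation_pow_succ_mul (D : Derivation R A A) (p g : A) (m : ℕ) :
    D (p ^ (m + 1) * g) = p ^ m * ((m + 1) * D p * g + p * D g) := by
  simp only [Derivation.leibniz, Derivation.leibniz_pow, smul_eq_mul, nsmul_eq_mul,
    Nat.add_sub_cancel]
  push_cast
  ring

-- The cofactor `g` is needed for the induction: applying `D` to `p ^ (m + 1)` leaves one.
theorem map_iterate_derivation_pow_mul (D : Derivation R A A) (φ : A →+* B) {p : A}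
    (hp : φ p = 0) (m : ℕ) (g : A) :
    φ (D^[m] (p ^ m * g)) = m.factorial * φ (D p) ^ m * φ g := by
  induction m generalizing g with
  | zero => simp
  | succ m ih =>
    calc φ (D^[m + 1] (p ^ (m + 1) * g))
        = φ (D^[m] (p ^ m * ((m + 1) * D p * g + p * D g))) := by
          rw [Function.iterate_succ_apply, derivation_pow_succ_mul]
      _ = m.factorial * φ (D p) ^ m * φ ((m + 1) * D p * g + p * D g) := ih _
      _ = m.factorial * φ (D p) ^ m * ((m + 1) * φ (D p) * φ g) := by simp [hp]
      _ = (m + 1).factorial * φ (D p) ^ (m + 1) * φ g := by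
          rw [Nat.factorial_succ]
          push_cast
          ring

theorem map_iterate_derivation_pow (D : Derivation R A A) (φ : A →+* B) {p : A}
    (hp : φ p = 0) (m : ℕ) :
    φ (D^[m] (p ^ m)) = m.factorial * φ (D p) ^ m := by
  simpa using map_iterate_derivation_pow_mul D φ hp m 1

end Derivation

theorem eval_iterate_mul_derivative_pow {R : Type*} [CommSemiring R] (q : R[X]) {p : R[X]} {a : R}
    (hp : p.IsRoot a) (m : ℕ) :
    ((fun h : R[X] => q * derivative h)^[m] (p ^ m)).eval a =
      m.factorial * (q.eval a * (derivative p).eval a) ^ m := by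
  rw [← eval_mul]
  exact map_iterate_derivation_pow (q • derivative') (evalRingHom a) hp m

theorem x_dx_iterate_one_sub_X_pow_eval_one_general {R : Type*} [CommRing R] (m : ℕ) :
    ((fun h : R[X] => X * derivative h)^[m] ((1 - X : R[X]) ^ m)).eval 1 =
      (-1 : R) ^ m * (m.factorial : R) := by
  have isRoot_one : (1 - X : R[X]).IsRoot 1 := by simp
  have eval_derivative : (X : R[X]).eval 1 * (derivative (1 - X : R[X])).eval 1 = -1 := by simp
  rw [eval_iterate_mul_derivative_pow X isRoot_one, eval_derivative, mul_comm]

/-- For every natural number `m`, the polynomial obtained by applying the operator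
`x·(d/dx)` exactly `m` times to `(1-x)^m` in `ℚ[x]` takes the value `(-1)^m · m!`
at `x = 1`. -/
theorem x_dx_iterate_one_sub_X_pow_eval_one (m : ℕ) :
    ((fun h : Polynomial ℚ => X * derivative h)^[m] ((1 - X : Polynomial ℚ) ^ m)).eval 1 =
      (-1 : ℚ) ^ m * (Nat.factorial m : ℚ) :=
  x_dx_iterate_one_sub_X_pow_eval_one_general m
end

section
/- For every natural number i ≥ 1 and every natural number n, there exists a polynomial P with rational coefficients of degree strictly less than i such that for all natural numbers s with 0 ≤ s ≤ n: ∑_{k=1}^{s} k^i + (-1)^i · ∑_{k=1}^{n-s} k^i = (n+1)·s^i + P(s). -/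
open Polynomial

/-!
Since `(-1) ^ i * k ^ i = (-k) ^ i`, the left-hand side is the sum of `t ^ i` over all integers `t`
with `-(n - s) ≤ t ≤ s`, the term `t = 0` being zero as `i ≠ 0`. Writing `t = s - j`, it becomes
`∑ j ≤ n, (s - j) ^ i`, a sum of `n + 1` monic polynomials of degree `i` in `s`, and `P` is this
sum with its term `(n + 1) * s ^ i` of degree `i` removed.
-/

lemma sum_range_natCast_sub {G M : Type*} [AddGroupWithOne G] [AddCommMonoid M]
    (f : G → M) (s m : ℕ) :
    ∑ j ∈ Finset.range (s + m + 1), f (s - j) =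
      ∑ k ∈ Finset.Icc 1 s, f k + f 0 + ∑ k ∈ Finset.Icc 1 m, f (-k) := by
  have nonneg_part : ∑ j ∈ Finset.range (s + 1), f (s - j) =
      ∑ k ∈ Finset.Icc 1 s, f k + f 0 := by
    calc ∑ j ∈ Finset.range (s + 1), f (s - j)
        = ∑ j ∈ Finset.range (s + 1), f ((s - j : ℕ) : G) :=
          Finset.sum_congr rfl fun j hj ↦ by
            rw [Nat.cast_sub (Finset.mem_range_succ_iff.mp hj)]
      _ = ∑ k ∈ Finset.range (s + 1), f k := Finset.sum_range_reflect (fun k ↦ f k) (s + 1)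
      _ = ∑ k ∈ Finset.Icc 1 s, f k + f 0 := by
          rw [Finset.sum_range_succ', Nat.cast_zero, Finset.range_eq_Ico,
            Finset.sum_Ico_add' (fun k : ℕ ↦ f k), zero_add, Finset.Ico_add_one_right_eq_Icc]
  have neg_part : ∑ j ∈ Finset.range m, f (s - (s + 1 + j : ℕ)) =
      ∑ k ∈ Finset.Icc 1 m, f (-k) := by
    calc ∑ j ∈ Finset.range m, f (s - (s + 1 + j : ℕ))
        = ∑ j ∈ Finset.range m, f (-(j + 1 : ℕ)) :=
          Finset.sum_congr rfl fun j _ ↦ by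
            rw [add_assoc, add_comm s, add_comm 1, Nat.cast_add (j + 1), sub_add_cancel_right]
      _ = ∑ k ∈ Finset.Icc 1 m, f (-k) := by
          rw [Finset.range_eq_Ico, Finset.sum_Ico_add' (fun k : ℕ ↦ f (-k)), zero_add,
            Finset.Ico_add_one_right_eq_Icc]
  rw [add_right_comm, Finset.sum_range_add, nonneg_part, neg_part]

lemma sum_pow_add_neg_one_pow_mul_sum_pow {R : Type*} [Ring R] {i : ℕ} (hi : i ≠ 0) (s m : ℕ) :
    ∑ k ∈ Finset.Icc 1 s, (k : R) ^ i + (-1) ^ i * ∑ k ∈ Finset.Icc 1 m, (k : R) ^ i =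
      ∑ j ∈ Finset.range (s + m + 1), ((s : R) - j) ^ i := by
  rw [sum_range_natCast_sub (fun x : R ↦ x ^ i), zero_pow hi, add_zero, Finset.mul_sum]
  simp only [← neg_pow]

lemma degree_X_sub_C_pow_sub_X_pow_lt {R : Type*} [Ring R] (a : R) (i : ℕ) :
    ((X - C a) ^ i - X ^ i : R[X]).degree < i := by
  nontriviality R
  have hmonic : ((X - C a) ^ i).Monic := (monic_X_sub_C a).pow i
  have hdegree : ((X - C a) ^ i : R[X]).degree = i := by
    rw [degree_eq_natDegree hmonic.ne_zero, (monic_X_sub_C a).natDegree_pow, natDegree_X_sub_C,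
      mul_one]
  calc ((X - C a) ^ i - X ^ i : R[X]).degree
      < ((X - C a) ^ i).degree :=
        degree_sub_lt_left (hdegree.trans (degree_X_pow i).symm) hmonic.ne_zero
          (hmonic.leadingCoeff.trans (leadingCoeff_X_pow i).symm)
    _ = i := hdegree

lemma degree_sum_X_sub_C_pow_sub_lt {ι R : Type*} [Ring R] (t : Finset ι) (a : ι → R) (i : ℕ) :
    (∑ j ∈ t, (X - C (a j)) ^ i - t.card • X ^ i : R[X]).degree < i := by
  rw [← Finset.sum_const, ← Finset.sum_sub_distrib, ← mem_degreeLT]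
  exact Submodule.sum_mem _ fun j _ ↦ mem_degreeLT.mpr (degree_X_sub_C_pow_sub_X_pow_lt (a j) i)

theorem exists_poly_sum_pow_add_neg_sum_pow_general (R : Type*) [CommRing R] (i n : ℕ)
    (hi : 1 ≤ i) :
    ∃ P : R[X], P.degree < i ∧ ∀ s : ℕ, s ≤ n →
      ∑ k ∈ Finset.Icc 1 s, (k : R) ^ i + (-1) ^ i * ∑ k ∈ Finset.Icc 1 (n - s), (k : R) ^ i =
        ((n : R) + 1) * (s : R) ^ i + P.eval (s : R) := by
  refine ⟨_, degree_sum_X_sub_C_pow_sub_lt (Finset.range (n + 1)) (fun j ↦ (j : R)) i,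
    fun s hs ↦ ?_⟩
  rw [sum_pow_add_neg_one_pow_mul_sum_pow (Nat.one_le_iff_ne_zero.mp hi),
    Nat.add_sub_cancel' hs]
  simp [eval_finsetSum]

/-- For every natural number `i ≥ 1` and every natural number `n`, there exists a
polynomial `P` with rational coefficients of degree strictly less than `i` such that
for all natural numbers `s ≤ n`:
`∑_{k=1}^{s} k^i + (-1)^i · ∑_{k=1}^{n-s} k^i = (n+1)·s^i + P(s)`. -/
theorem exists_poly_sum_pow_add_neg_sum_pow (i n : ℕ) (hi : 1 ≤ i) :
    ∃ P : Polynomial ℚ, P.degree < (i : ℕ) ∧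
      ∀ s : ℕ, s ≤ n →
        (∑ k ∈ Finset.Icc 1 s, (k : ℚ) ^ i) +
            (-1 : ℚ) ^ i * (∑ k ∈ Finset.Icc 1 (n - s), (k : ℚ) ^ i) =
          ((n : ℚ) + 1) * (s : ℚ) ^ i + P.eval (s : ℚ) :=
  exists_poly_sum_pow_add_neg_sum_pow_general ℚ i n hi
end
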